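/- (Generalised Tarsi's Lemma) If a generalised clause-set F is minimally unsatisfiable, then δ*(F) = δ(F) ≥ 1. -/

import Mathlib

open scoped Classical

namespace GCLS

variable {V α : Type} [DecidableEq V] [DecidableEq α]

/-- A finite "functional" set of (variable, value) pairs, with values inside the
given domains `D`; used both for clauses and for partial assignments. -/
def FinFn (D : V → Finset α) : Type :=
  { s : Finset (V × α) // (∀ p ∈ s, p.2 ∈ D p.1) ∧
      ∀ p ∈ s, ∀ q ∈ s, p.1 = q.1 → p = q }

variable {D : V → Finset α}

instance : DecidableEq (FinFn D) :=
  fun a b => decidable_of_iff (a.1 = b.1) Subtype.ext_iff.symm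

namespace FinFn

/-- The set of variables occurring. -/
def vars (s : FinFn D) : Finset V := s.1.image Prod.fst

/-- Restriction to the pairs whose variable lies in `W`. -/
def restrictVars (s : FinFn D) (W : Finset V) : FinFn D :=
  ⟨s.1.filter (fun p => p.1 ∈ W),
   fun p hp => s.2.1 p (Finset.mem_filter.mp hp).1,
   fun p hp q hq h =>
     s.2.2 p (Finset.mem_filter.mp hp).1 q (Finset.mem_filter.mp hq).1 h⟩

/-- Removal of a set of pairs. -/
def sdiff (s : FinFn D) (t : Finset (V × α)) : FinFn D :=
  ⟨s.1 \ t,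
   fun p hp => s.2.1 p (Finset.mem_sdiff.mp hp).1,
   fun p hp q hq h =>
     s.2.2 p (Finset.mem_sdiff.mp hp).1 q (Finset.mem_sdiff.mp hq).1 h⟩

end FinFn

/-- Clauses: finite sets of literals `(v,ε)` (meaning "v ≠ ε"), at most one literal
per variable, values inside the domains. -/
abbrev Clause (D : V → Finset α) := FinFn D

/-- Partial assignments: finitely many variables get values inside their domains. -/
abbrev PAssign (D : V → Finset α) := FinFn D

/-- `φ` satisfies the literal `(v,ε)` (i.e. "v ≠ ε"): `v` is assigned a value ≠ `ε`. -/
def SatLit (φ : PAssign D) (l : V × α) : Prop :=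
  ∃ ε, (l.1, ε) ∈ φ.1 ∧ ε ≠ l.2

/-- `φ` satisfies a clause iff it satisfies some literal of it. -/
def SatClause (φ : PAssign D) (C : Clause D) : Prop :=
  ∃ l ∈ C.1, SatLit φ l

/-- The clause obtained from `C` by deleting all literals falsified by `φ`. -/
def Clause.restrict (φ : PAssign D) (C : Clause D) : Clause D :=
  FinFn.sdiff C φ.1

/-- The operation `φ * F` on multi-clause-sets: remove all clauses satisfied by `φ`
and delete all falsified literals from the remaining clauses. -/
noncomputable def applyM (φ : PAssign D) (F : Multiset (Clause D)) : Multiset (Clause D) :=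
  (F.filter (fun C => ¬ SatClause φ C)).map (Clause.restrict φ)

/-- The operation `φ * F` on clause-sets (with contraction of equal clauses). -/
noncomputable def applyF (φ : PAssign D) (F : Finset (Clause D)) : Finset (Clause D) :=
  (F.filter (fun C => ¬ SatClause φ C)).image (Clause.restrict φ)

/-- Satisfiability: some partial assignment satisfies all clauses. -/
def Sat (F : Multiset (Clause D)) : Prop :=
  ∃ φ : PAssign D, applyM φ F = 0

/-- Minimal unsatisfiability of a clause-set. -/
def MinUnsat (F : Finset (Clause D)) : Prop :=
  ¬ Sat F.val ∧ ∀ F' ⊂ F, Sat F'.val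

/-- The variables of a multi-clause-set. -/
def mvars (F : Multiset (Clause D)) : Finset V := F.toFinset.sup FinFn.vars

/-- The deficiency `δ(F) = c(F) - Σ_{v ∈ var(F)} (|D_v| - 1)`. -/
def delta (F : Multiset (Clause D)) : ℤ :=
  (Multiset.card F : ℤ) - ∑ v ∈ mvars F, ((D v).card - 1 : ℤ)

lemma powerset_toFinset_nonempty (F : Multiset (Clause D)) :
    F.powerset.toFinset.Nonempty :=
  ⟨0, by simp⟩

/-- The maximal deficiency `δ*(F) = max {δ(F') : F' ≤ F}`. -/
noncomputable def deltaStar (F : Multiset (Clause D)) : ℤ :=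
  F.powerset.toFinset.sup' (powerset_toFinset_nonempty F) delta

/-- A tight sub-multi-clause-set: `F' ≤ F` with `δ(F') = δ*(F)`. -/
noncomputable def Tight (F F' : Multiset (Clause D)) : Prop :=
  F' ≤ F ∧ delta F' = deltaStar F

/-- `F` is matching satisfiable: the clause-variable graph `B(F)` has a matching
covering all clause-nodes.  Such a matching is encoded as a multiset `P` of pairs
(clause-occurrence, variable-node), where the variable-nodes `(v,k)`,
`k < |D v| - 1`, are the copies of the variable `v`; the matching covers each
clause-occurrence exactly once (`P.map Prod.fst = F`), uses pairwise distinct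
variable-nodes, and respects adjacency in `B(F)`. -/
def MatchingSat (F : Multiset (Clause D)) : Prop :=
  ∃ P : Multiset (Clause D × (V × ℕ)),
    P.map Prod.fst = F ∧ (P.map Prod.snd).Nodup ∧
    ∀ p ∈ P, p.2.1 ∈ FinFn.vars p.1 ∧ p.2.2 < (D p.2.1).card - 1

/-- The edge between clause `C` and the copies of variable `v` is retained in
`B_φ(F)`: the literal of `C` with variable `v` is satisfied by `φ`. -/
def EdgeSat (φ : PAssign D) (C : Clause D) (v : V) : Prop :=
  ∃ ε, (v, ε) ∈ C.1 ∧ SatLit φ (v, ε)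

/-- `φ` is matching-satisfying for `F`: `B_φ(F)` has a matching covering all
clause-nodes. -/
def MatchingSatisfying (φ : PAssign D) (F : Multiset (Clause D)) : Prop :=
  ∃ P : Multiset (Clause D × (V × ℕ)),
    P.map Prod.fst = F ∧ (P.map Prod.snd).Nodup ∧
    ∀ p ∈ P, p.2.2 < (D p.2.1).card - 1 ∧ EdgeSat φ p.1 p.2.1

/-- The maximum size of a matching in `B(F)`. -/
noncomputable def nu (F : Multiset (Clause D)) : ℕ :=
  sSup { k | ∃ P : Multiset (Clause D × (V × ℕ)),
    P.map Prod.fst ≤ F ∧ (P.map Prod.snd).Nodup ∧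
    (∀ p ∈ P, p.2.1 ∈ FinFn.vars p.1 ∧ p.2.2 < (D p.2.1).card - 1) ∧
    Multiset.card P = k }

/-- The maximum size of a matching in `B_φ(F)`. -/
noncomputable def nuSub (φ : PAssign D) (F : Multiset (Clause D)) : ℕ :=
  sSup { k | ∃ P : Multiset (Clause D × (V × ℕ)),
    P.map Prod.fst ≤ F ∧ (P.map Prod.snd).Nodup ∧
    (∀ p ∈ P, p.2.2 < (D p.2.1).card - 1 ∧ EdgeSat φ p.1 p.2.1) ∧
    Multiset.card P = k }

/-- `φ` is matching-maximum for `F`. -/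
noncomputable def MatchingMaximum (φ : PAssign D) (F : Multiset (Clause D)) : Prop :=
  nuSub φ F = nu F

/-- `φ` is an autarky for `F`: every clause touched by `φ` is satisfied by `φ`. -/
def IsAutarky (φ : PAssign D) (F : Multiset (Clause D)) : Prop :=
  ∀ C ∈ F, (FinFn.vars C ∩ FinFn.vars φ).Nonempty → SatClause φ C

/-- `F` is lean: it has no non-trivial autarky. -/
def IsLean (F : Multiset (Clause D)) : Prop :=
  ¬ ∃ φ : PAssign D, IsAutarky φ F ∧ (FinFn.vars φ ∩ mvars F).Nonempty

/-- The sub-multi-clause-set of clauses touched by the variables in `W`. -/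
noncomputable def touchedBy (F : Multiset (Clause D)) (W : Finset V) : Multiset (Clause D) :=
  F.filter (fun C => (FinFn.vars C ∩ W).Nonempty)

/-- The restriction `F[W]`: keep the clauses touching `W` and delete from them all
literals whose variable is not in `W`. -/
noncomputable def restrictTo (F : Multiset (Clause D)) (W : Finset V) : Multiset (Clause D) :=
  (touchedBy F W).map (fun C => FinFn.restrictVars C W)

/-- `φ` is a matching autarky for `F`: `φ` is matching-satisfying for the
sub-multi-clause-set of clauses touched by `φ`. -/
noncomputable def IsMatchingAutarky (φ : PAssign D) (F : Multiset (Clause D)) : Prop :=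
  MatchingSatisfying φ (touchedBy F (FinFn.vars φ))

/-- `F` is matching lean: no non-trivial matching autarky. -/
noncomputable def MatchingLean (F : Multiset (Clause D)) : Prop :=
  ¬ ∃ φ : PAssign D, IsMatchingAutarky φ F ∧ (FinFn.vars φ ∩ mvars F).Nonempty

lemma surp_nonempty {F : Multiset (Clause D)} (h : (mvars F).Nonempty) :
    ((mvars F).powerset.erase ∅).Nonempty := by
  obtain ⟨v, hv⟩ := h
  refine ⟨{v}, ?_⟩
  simp [Finset.mem_erase, Finset.singleton_subset_iff, hv]

/-- The surplus `surp(F) = min {δ(F[W]) : ∅ ≠ W ⊆ var(F)}` (and `0` if `var(F) = ∅`). -/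
noncomputable def surp (F : Multiset (Clause D)) : ℤ :=
  if h : (mvars F).Nonempty then
    ((mvars F).powerset.erase ∅).inf' (surp_nonempty h)
      (fun W => delta (restrictTo F W))
  else 0

/-- The number of occurrences of the literal `l` in `F`. -/
noncomputable def litCount (F : Multiset (Clause D)) (l : V × α) : ℕ :=
  Multiset.card (F.filter (fun C => l ∈ C.1))

/-- The number of occurrences `#_v(F)` of the variable `v` in `F`. -/
noncomputable def varCount (F : Multiset (Clause D)) (v : V) : ℕ :=
  ∑ ε ∈ D v, litCount F (v, ε)

/-- The partial assignment `⟨v → ε⟩`. -/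
def single (v : V) (ε : α) (hε : ε ∈ D v) : PAssign D :=
  ⟨{(v, ε)}, by
    refine ⟨?_, ?_⟩
    · intro p hp
      rw [Finset.mem_singleton] at hp
      subst hp; exact hε
    · intro p hp q hq _
      rw [Finset.mem_singleton] at hp hq
      subst hp; subst hq; rfl⟩

/-- Composition `φ ∘ ψ` of partial assignments: domain is the union of the domains,
`ψ` taking precedence. -/
def comp (φ ψ : PAssign D) : PAssign D :=
  ⟨ψ.1 ∪ φ.1.filter (fun p => p.1 ∉ FinFn.vars ψ), by
    constructor
    · intro p hp
      rcases Finset.mem_union.mp hp with h | h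
      · exact ψ.2.1 p h
      · exact φ.2.1 p (Finset.mem_filter.mp h).1
    · intro p hp q hq hpq
      rcases Finset.mem_union.mp hp with h1 | h1 <;>
        rcases Finset.mem_union.mp hq with h2 | h2
      · exact ψ.2.2 p h1 q h2 hpq
      · exact absurd (hpq ▸ Finset.mem_image_of_mem Prod.fst h1)
          (Finset.mem_filter.mp h2).2
      · exact absurd (hpq.symm ▸ Finset.mem_image_of_mem Prod.fst h2)
          (Finset.mem_filter.mp h1).2
      · exact φ.2.2 p (Finset.mem_filter.mp h1).1 q (Finset.mem_filter.mp h2).1 hpq⟩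

/-- Two clauses clash (in some variable). -/
def Clash (C C' : Clause D) : Prop :=
  ∃ v ε ε', (v, ε) ∈ C.1 ∧ (v, ε') ∈ C'.1 ∧ ε ≠ ε'

/-- The number of variables in which two clauses clash. -/
noncomputable def clashCount (C C' : Clause D) : ℕ :=
  ((FinFn.vars C).filter
    (fun v => ∃ ε ε', (v, ε) ∈ C.1 ∧ (v, ε') ∈ C'.1 ∧ ε ≠ ε')).card

/-- Hitting clause-sets: every two distinct clauses clash. -/
def Hitting (F : Finset (Clause D)) : Prop :=
  ∀ C ∈ F, ∀ C' ∈ F, C ≠ C' → Clash C C'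

/-- Boolean clauses over the boolean variables `V × α` (one boolean variable per
generalised literal; the value `false` gives the positive boolean literal). -/
abbrev BClause (V α : Type) :=
  Clause (fun _ : V × α => (Finset.univ : Finset Bool))

/-- The direct translation of a single clause: each literal `(v,ε)` is replaced by
the positive boolean literal of the boolean variable `(v,ε)`. -/
def dirClause (C : Clause D) : BClause V α :=
  ⟨C.1.image (fun p => (p, false)), by
    constructor
    · intro p _; exact Finset.mem_univ _
    · intro p hp q hq h
      simp only [Finset.mem_image] at hp hq
      obtain ⟨a, -, rfl⟩ := hp
      obtain ⟨b, -, rfl⟩ := hq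
      exact congrArg (fun x => (x, false)) h⟩

/-- The ALO-clause for a variable `v`: the negative boolean literals of the boolean
variables `(v,ε)` for `ε ∈ D v`. -/
def aloClause (D : V → Finset α) (v : V) : BClause V α :=
  ⟨(D v).image (fun ε => ((v, ε), true)), by
    constructor
    · intro p _; exact Finset.mem_univ _
    · intro p hp q hq h
      simp only [Finset.mem_image] at hp hq
      obtain ⟨a, -, rfl⟩ := hp
      obtain ⟨b, -, rfl⟩ := hq
      exact congrArg (fun x => (x, true)) h⟩

/-- The direct translation `Γ(F)`: the translated clauses together with the
ALO-clauses for all occurring variables. -/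
noncomputable def dirTrans (F : Finset (Clause D)) : Finset (BClause V α) :=
  F.image dirClause ∪ (mvars F.val).image (aloClause D)

/-!
By Hall's theorem, `δ*(F) ≤ 0` yields a matching of all clauses of `F` into the copies of their
variables. A variable `v` then has to satisfy at most `|D_v| - 1` clauses, each of which excludes
one value, so some value of `v` satisfies all of them. Hence an unsatisfiable `F` has `δ*(F) ≥ 1`.

If `G ≤ F` has maximal deficiency, then the clauses of `F` outside `G`, once the variables of `G`
are deleted from them, have maximal deficiency at most `0`, and by the above they can be satisfied
without touching the variables of `G`. So `F` is satisfiable as soon as `G` is, and for minimally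
unsatisfiable `F` this forces `G = F`.
-/

theorem exists_le_map_eq {β γ : Type*} {f : β → γ} {s : Multiset β} {t : Multiset γ}
    (h : t ≤ s.map f) : ∃ u ≤ s, u.map f = t := by
  induction s using Quotient.inductionOn with | _ l
  induction t using Quotient.inductionOn with | _ m
  obtain ⟨m', hperm, hsub⟩ : m.Subperm (l.map f) := h
  obtain ⟨l', hl', rfl⟩ := List.sublist_map_iff.mp hsub
  exact ⟨l', hl'.subperm, Quot.sound hperm⟩

namespace FinFn

omit [DecidableEq α]

theorem mem_vars {s : FinFn D} {v : V} : v ∈ s.vars ↔ ∃ ε, (v, ε) ∈ s.1 := by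
  simp [vars]

theorem domain_nonempty_of_mem_vars {s : FinFn D} {v : V} (hv : v ∈ s.vars) : (D v).Nonempty := by
  obtain ⟨ε, hε⟩ := mem_vars.mp hv
  exact ⟨ε, s.2.1 _ hε⟩

theorem mem_restrictVars {s : FinFn D} {W : Finset V} {p : V × α} :
    p ∈ (s.restrictVars W).1 ↔ p ∈ s.1 ∧ p.1 ∈ W :=
  Finset.mem_filter

theorem vars_restrictVars (s : FinFn D) (W : Finset V) : (s.restrictVars W).vars = s.vars ∩ W := by
  ext v
  simp only [Finset.mem_inter, mem_vars, mem_restrictVars, exists_and_right]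

omit [DecidableEq V] in
theorem exists_forall_mem_of_forall_exists {W : Finset V} {p : V → α → Prop}
    (h : ∀ v ∈ W, ∃ ε ∈ D v, p v ε) : ∃ φ : FinFn D, ∀ v ∈ W, ∃ ε, (v, ε) ∈ φ.1 ∧ p v ε := by
  choose g hgD hgp using h
  refine ⟨⟨W.attach.image fun v => (v.1, g v.1 v.2), ?_, ?_⟩, fun v hv => ⟨g v hv, ?_, hgp v hv⟩⟩
  · intro q hq
    obtain ⟨v, -, rfl⟩ := Finset.mem_image.mp hq
    exact hgD v.1 v.2
  · intro q hq r hr hqr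
    obtain ⟨v, -, rfl⟩ := Finset.mem_image.mp hq
    obtain ⟨w, -, rfl⟩ := Finset.mem_image.mp hr
    obtain rfl : v = w := Subtype.ext hqr
    rfl
  · exact Finset.mem_image.mpr ⟨⟨v, hv⟩, Finset.mem_attach _ _, rfl⟩

end FinFn

omit [DecidableEq α] in
theorem SatLit.restrictVars {φ : PAssign D} {l : V × α} {W : Finset V} (h : SatLit φ l)
    (hl : l.1 ∈ W) : SatLit (φ.restrictVars W) l := by
  obtain ⟨ε, hε, hne⟩ := h
  exact ⟨ε, FinFn.mem_restrictVars.mpr ⟨hε, hl⟩, hne⟩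

theorem SatLit.comp_right {ψ : PAssign D} {l : V × α} (h : SatLit ψ l) (φ : PAssign D) :
    SatLit (comp φ ψ) l := by
  obtain ⟨ε, hε, hne⟩ := h
  exact ⟨ε, Finset.mem_union_left _ hε, hne⟩

theorem SatLit.comp_left {φ ψ : PAssign D} {l : V × α} (h : SatLit φ l) (hl : l.1 ∉ ψ.vars) :
    SatLit (comp φ ψ) l := by
  obtain ⟨ε, hε, hne⟩ := h
  exact ⟨ε, Finset.mem_union_right _ (Finset.mem_filter.mpr ⟨hε, hl⟩), hne⟩

theorem sat_iff {F : Multiset (Clause D)} :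
    Sat F ↔ ∃ φ : PAssign D, ∀ C ∈ F, SatClause φ C := by
  simp only [Sat, applyM, Multiset.map_eq_zero, Multiset.filter_eq_nil, not_not]

theorem mem_mvars {F : Multiset (Clause D)} {v : V} :
    v ∈ mvars F ↔ ∃ C ∈ F, v ∈ C.vars := by
  simp only [mvars, Finset.mem_sup, Multiset.mem_toFinset]

theorem mvars_add (F G : Multiset (Clause D)) : mvars (F + G) = mvars F ∪ mvars G := by
  simp only [mvars, Multiset.toFinset_add, Finset.sup_union, Finset.sup_eq_union]

/-- The clause `C` without its literals on the variables in `W`. -/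
def Clause.deleteVars (C : Clause D) (W : Finset V) : Clause D :=
  C.restrictVars (C.vars \ W)

/-- The multi-clause-set `W * F`: all literals on the variables in `W` are deleted from the clauses
of `F`. Clauses that become equal are kept with their multiplicities, so no clause gets lost and
deficiencies stay additive. -/
def deleteVars (F : Multiset (Clause D)) (W : Finset V) : Multiset (Clause D) :=
  F.map fun C => C.deleteVars W

omit [DecidableEq α] in
theorem Clause.mem_deleteVars {C : Clause D} {W : Finset V} {l : V × α} :
    l ∈ (C.deleteVars W).1 ↔ l ∈ C.1 ∧ l.1 ∉ W := by
  have mem_vars_of_mem : l ∈ C.1 → l.1 ∈ C.vars := Finset.mem_image_of_mem Prod.fst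
  simp only [Clause.deleteVars, FinFn.mem_restrictVars, Finset.mem_sdiff]
  tauto

theorem mvars_deleteVars (F : Multiset (Clause D)) (W : Finset V) :
    mvars (deleteVars F W) = mvars F \ W := by
  ext v
  simp only [deleteVars, mem_mvars, Multiset.mem_map, exists_exists_and_eq_and, Finset.mem_sdiff,
    FinFn.mem_vars, Clause.mem_deleteVars, exists_and_right, ← and_assoc]

theorem Sat.add_of_deleteVars {F G : Multiset (Clause D)} (hF : Sat F)
    (hG : Sat (deleteVars G (mvars F))) : Sat (F + G) := by
  obtain ⟨φ, hφ⟩ := sat_iff.mp hF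
  obtain ⟨ψ, hψ⟩ := sat_iff.mp hG
  refine sat_iff.mpr ⟨comp ψ (φ.restrictVars (mvars F)), fun C hC => ?_⟩
  rcases Multiset.mem_add.mp hC with hCF | hCG
  · obtain ⟨l, hl, hsat⟩ := hφ C hCF
    have hlF : l.1 ∈ mvars F := mem_mvars.mpr ⟨C, hCF, Finset.mem_image_of_mem _ hl⟩
    exact ⟨l, hl, (hsat.restrictVars hlF).comp_right ψ⟩
  · obtain ⟨l, hl, hsat⟩ := hψ _ (Multiset.mem_map_of_mem _ hCG)
    obtain ⟨hlC, hlF⟩ := Clause.mem_deleteVars.mp hl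
    refine ⟨l, hlC, hsat.comp_left ?_⟩
    rw [FinFn.vars_restrictVars]
    exact fun h => hlF (Finset.mem_inter.mp h).2

theorem delta_add_eq_add_delta_deleteVars (F G : Multiset (Clause D)) :
    delta (F + G) = delta F + delta (deleteVars G (mvars F)) := by
  have hvars : mvars (F + G) = mvars F ∪ (mvars G \ mvars F) := by
    rw [mvars_add, Finset.union_sdiff_self_eq_union]
  have hcard : Multiset.card (deleteVars G (mvars F)) = Multiset.card G := Multiset.card_map _ _
  simp only [delta, hvars, mvars_deleteVars, Finset.sum_union Finset.disjoint_sdiff,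
    Multiset.card_add, hcard]
  push_cast
  ring

theorem deltaStar_le_iff {F : Multiset (Clause D)} {k : ℤ} :
    deltaStar F ≤ k ↔ ∀ G ≤ F, delta G ≤ k := by
  simp only [deltaStar, Finset.sup'_le_iff, Multiset.mem_toFinset, Multiset.mem_powerset]

theorem delta_le_deltaStar {F G : Multiset (Clause D)} (h : G ≤ F) : delta G ≤ deltaStar F :=
  deltaStar_le_iff.mp le_rfl G h

theorem exists_tight (F : Multiset (Clause D)) : ∃ G, Tight F G := by
  obtain ⟨G, hG, hδ⟩ := Finset.exists_mem_eq_sup' (powerset_toFinset_nonempty F) delta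
  exact ⟨G, Multiset.mem_powerset.mp (Multiset.mem_toFinset.mp hG), hδ.symm⟩

theorem Tight.deltaStar_deleteVars_nonpos {F G : Multiset (Clause D)} (h : Tight F G) :
    deltaStar (deleteVars (F - G) (mvars G)) ≤ 0 := by
  refine deltaStar_le_iff.mpr fun K hK => ?_
  obtain ⟨H, hH, rfl⟩ := exists_le_map_eq hK
  have hGH : G + H ≤ F :=
    (add_le_add_right hH G).trans_eq (add_tsub_cancel_of_le h.1)
  have hδ : delta G + delta (deleteVars H (mvars G)) ≤ delta G :=
    calc delta G + delta (deleteVars H (mvars G))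
        = delta (G + H) := (delta_add_eq_add_delta_deleteVars G H).symm
      _ ≤ deltaStar F := delta_le_deltaStar hGH
      _ = delta G := h.2.symm
  exact (add_le_iff_nonpos_right _).mp hδ

/-- The variable-nodes of the clause-variable graph over the variables in `W`: each variable `v`
has the `|D v| - 1` copies `(v, k)`, as in `MatchingSat`. -/
def varNodes (D : V → Finset α) (W : Finset V) : Finset (V × ℕ) :=
  (W.sigma fun v => Finset.range ((D v).card - 1)).map (Equiv.sigmaEquivProd V ℕ).toEmbedding

omit [DecidableEq V] [DecidableEq α] in
theorem mem_varNodes {W : Finset V} {p : V × ℕ} :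
    p ∈ varNodes D W ↔ p.1 ∈ W ∧ p.2 < (D p.1).card - 1 := by
  simp [varNodes]

theorem delta_eq_card_sub_card_varNodes (F : Multiset (Clause D)) :
    delta F = (Multiset.card F : ℤ) - ((varNodes D (mvars F)).card : ℤ) := by
  have hcard : ∀ v ∈ mvars F, (((D v).card - 1 : ℕ) : ℤ) = ((D v).card : ℤ) - 1 := fun v hv => by
    obtain ⟨C, -, hvC⟩ := mem_mvars.mp hv
    exact Nat.cast_pred (FinFn.domain_nonempty_of_mem_vars hvC).card_pos
  simp only [delta, varNodes, Finset.card_map, Finset.card_sigma, Finset.card_range, Nat.cast_sum,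
    Finset.sum_congr rfl hcard]

theorem biUnion_varNodes_vars {F : Multiset (Clause D)} (s : Finset F.ToType) :
    (s.biUnion fun x => varNodes D (FinFn.vars x.1)) = varNodes D (mvars (s.val.map (·.1))) := by
  ext p
  simp only [Finset.mem_biUnion, mem_varNodes, mem_mvars, Multiset.mem_map, Finset.mem_val,
    exists_exists_and_eq_and, ← and_assoc, exists_and_right]

theorem matchingSat_of_deltaStar_nonpos {F : Multiset (Clause D)} (h : deltaStar F ≤ 0) :
    MatchingSat F := by
  have hall : ∀ s : Finset F.ToType,
      s.card ≤ (s.biUnion fun x => varNodes D (FinFn.vars x.1)).card := fun s => by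
    have hsF : s.val.map (·.1) ≤ F := by
      simpa only [Multiset.map_univ_coe] using
        Multiset.map_le_map (f := (·.1)) (Finset.val_le_iff.mpr s.subset_univ)
    have hδ := deltaStar_le_iff.mp h _ hsF
    rw [delta_eq_card_sub_card_varNodes, Multiset.card_map, Finset.card_val,
      ← biUnion_varNodes_vars] at hδ
    exact_mod_cast sub_nonpos.mp hδ
  obtain ⟨f, hf_inj, hf_mem⟩ := (Finset.all_card_le_biUnion_card_iff_exists_injective _).mp hall
  refine ⟨Finset.univ.val.map fun x => (x.1, f x), ?_, ?_, ?_⟩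
  · rw [Multiset.map_map]
    exact F.map_univ_coe
  · rw [Multiset.map_map]
    exact Finset.univ.nodup.map hf_inj
  · intro p hp
    obtain ⟨x, -, rfl⟩ := Multiset.mem_map.mp hp
    exact mem_varNodes.mp (hf_mem x)

omit [DecidableEq V] [DecidableEq α] in
theorem exists_mem_domain_forall_notMem_of_matching {P : Multiset (Clause D × (V × ℕ))}
    (hnodup : (P.map Prod.snd).Nodup) (hlt : ∀ p ∈ P, p.2.2 < (D p.2.1).card - 1)
    {v : V} (hv : (D v).Nonempty) :
    ∃ ε ∈ D v, ∀ p ∈ P, p.2.1 = v → (v, ε) ∉ p.1.1 := by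
  -- At most `|D v| - 1` clauses are matched to `v`, and each of them excludes only one value.
  by_contra! hexcl
  have hcard : (D v).card ≤ (Finset.range ((D v).card - 1)).card := by
    refine Finset.card_le_card_of_forall_subsingleton
      (fun ε k => ∃ p ∈ P, p.2 = (v, k) ∧ (v, ε) ∈ p.1.1) (fun ε hε => ?_) ?_
    · obtain ⟨p, hp, rfl, hpε⟩ := hexcl ε hε
      exact ⟨p.2.2, Finset.mem_range.mpr (hlt p hp), p, hp, rfl, hpε⟩
    · rintro k - ε ⟨-, p, hp, hpk, hpε⟩ ε' ⟨-, q, hq, hqk, hqε'⟩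
      obtain rfl : p = q := Multiset.inj_on_of_nodup_map hnodup p hp q hq (hpk.trans hqk.symm)
      exact congrArg Prod.snd (p.1.2.2 _ hpε _ hqε' rfl)
  have hpos := hv.card_pos
  rw [Finset.card_range] at hcard
  omega

theorem MatchingSat.sat {F : Multiset (Clause D)} (h : MatchingSat F) : Sat F := by
  obtain ⟨P, rfl, hnodup, hP⟩ := h
  obtain ⟨φ, hφ⟩ := FinFn.exists_forall_mem_of_forall_exists
    (W := mvars (P.map Prod.fst)) fun v hv => by
      obtain ⟨C, -, hvC⟩ := mem_mvars.mp hv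
      exact exists_mem_domain_forall_notMem_of_matching hnodup (fun p hp => (hP p hp).2)
        (FinFn.domain_nonempty_of_mem_vars hvC)
  refine sat_iff.mpr ⟨φ, fun C hC => ?_⟩
  obtain ⟨p, hp, rfl⟩ := Multiset.mem_map.mp hC
  obtain ⟨ε, hε⟩ := FinFn.mem_vars.mp (hP p hp).1
  obtain ⟨ε', hε', havoid⟩ := hφ p.2.1 (mem_mvars.mpr ⟨p.1, hC, (hP p hp).1⟩)
  refine ⟨(p.2.1, ε), hε, ε', hε', ?_⟩
  rintro rfl
  exact havoid p hp rfl hε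

theorem sat_of_deltaStar_nonpos {F : Multiset (Clause D)} (h : deltaStar F ≤ 0) : Sat F :=
  (matchingSat_of_deltaStar_nonpos h).sat

theorem Tight.sat {F G : Multiset (Clause D)} (h : Tight F G) (hG : Sat G) : Sat F := by
  rw [← add_tsub_cancel_of_le h.1]
  exact hG.add_of_deleteVars (sat_of_deltaStar_nonpos h.deltaStar_deleteVars_nonpos)

theorem MinUnsat.eq_of_tight {F : Finset (Clause D)} (hF : MinUnsat F) {G : Multiset (Clause D)}
    (hG : Tight F.val G) : G = F.val := by
  by_contra hne
  let G' : Finset (Clause D) := ⟨G, Multiset.nodup_of_le hG.1 F.nodup⟩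
  have hss : G' ⊂ F := Finset.val_lt_iff.mp (lt_of_le_of_ne hG.1 hne)
  exact hF.1 (hG.sat (hF.2 G' hss))

/-- generalised Tarsi's Lemma: a minimally unsatisfiable
generalised clause-set satisfies `δ*(F) = δ(F) ≥ 1`. -/
theorem tarsi_lemma
    (hD : ∀ v, (D v).Nonempty) (F : Finset (Clause D)) (hmu : MinUnsat F) :
    deltaStar F.val = delta F.val ∧ 1 ≤ delta F.val := by
  obtain ⟨G, hG⟩ := exists_tight F.val
  obtain rfl : G = F.val := hmu.eq_of_tight hG
  refine ⟨hG.2.symm, ?_⟩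
  rw [hG.2]
  by_contra! hlt
  exact hmu.1 (sat_of_deltaStar_nonpos (Int.lt_add_one_iff.mp hlt))

end GCLS
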